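/- arXiv:1208.2455 — 3 statements merged into one kernel-verified Lean document; each statement's English description precedes it below -/
import Mathlib

section
/- Let c > 0 and m be real numbers with m > √c, and let a, b > 0 satisfy √c·(coth(√c·a) + coth(√c·b)) = 2m. Then a + b ≥ (2/√c)·artanh(√c/m). -/
open Real

/-- The real hyperbolic cotangent. -/
noncomputable def Real.coth (x : ℝ) : ℝ := Real.cosh x / Real.sinh x

/-- The real inverse hyperbolic tangent. -/
noncomputable def Real.arctanh (x : ℝ) : ℝ := Real.log ((1 + x) / (1 - x)) / 2

/-- Inverted form of the coth midpoint inequality: if `c > 0`, `m > √c`,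
`a, b > 0` and `√c·(coth(√c·a) + coth(√c·b)) = 2m`, then
`a + b ≥ (2/√c)·artanh(√c/m)`. -/
theorem sum_ge_of_coth_mirror (c m a b : ℝ)
    (hc : 0 < c) (hm : Real.sqrt c < m) (ha : 0 < a) (hb : 0 < b)
    (hmirror : Real.sqrt c * (Real.coth (Real.sqrt c * a) + Real.coth (Real.sqrt c * b)) = 2 * m) :
    a + b ≥ (2 / Real.sqrt c) * Real.arctanh (Real.sqrt c / m) := by
  have hs : 0 < Real.sqrt c := Real.sqrt_pos.mpr hc
  generalize Real.sqrt c = s at *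
  have hm0 : 0 < m := hs.trans hm
  have hms : 0 < m - s := sub_pos.mpr hm
  have hp : 1 < Real.exp (s * a) := Real.one_lt_exp_iff.mpr (mul_pos hs ha)
  have hq : 1 < Real.exp (s * b) := Real.one_lt_exp_iff.mpr (mul_pos hs hb)
  have key : (1 + s / m) / (1 - s / m) ≤ Real.exp (s * (a + b)) := by
    have e1 : (1 + s / m) / (1 - s / m) = (m + s) / (m - s) := by
      have : 1 - s / m ≠ 0 := by
        rw [one_sub_div hm0.ne']
        positivity
      field_simp
    rw [e1, div_le_iff₀ hms, mul_add, Real.exp_add]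
    simp only [Real.coth, Real.cosh_eq, Real.sinh_eq, Real.exp_neg] at hmirror
    generalize Real.exp (s * a) = p at *
    generalize Real.exp (s * b) = q at *
    have hP : 0 < p ^ 2 - 1 := by nlinarith
    have hQ : 0 < q ^ 2 - 1 := by nlinarith
    have c1 : ∀ x : ℝ, 1 < x → (x + x⁻¹) / 2 / ((x - x⁻¹) / 2) = (x ^ 2 + 1) / (x ^ 2 - 1) := by
      intro x hx
      have h0 : x ≠ 0 := by linarith
      have h1 : x ^ 2 - 1 ≠ 0 := by nlinarith
      have h2 : x - x⁻¹ ≠ 0 := by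
        intro h
        apply h1
        field_simp at h
        linarith
      rw [div_div_div_cancel_right₀ (by norm_num), div_eq_div_iff h2 h1]
      field_simp
    rw [c1 p hp, c1 q hq] at hmirror
    have hm' : m = s * (p ^ 2 * q ^ 2 - 1) / ((p ^ 2 - 1) * (q ^ 2 - 1)) := by
      have : 2 * m = 2 * (s * (p ^ 2 * q ^ 2 - 1) / ((p ^ 2 - 1) * (q ^ 2 - 1))) := by
        rw [← hmirror]
        field_simp
        ring
      linarith
    have d : p * q * (m - s) - (m + s)
        = s * ((p * q + 1) * (p - q) ^ 2) / ((p ^ 2 - 1) * (q ^ 2 - 1)) := by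
      rw [hm']
      field_simp
      ring
    have : 0 ≤ s * ((p * q + 1) * (p - q) ^ 2) / ((p ^ 2 - 1) * (q ^ 2 - 1)) := by
      have : 0 < p := by linarith
      have : 0 < q := by linarith
      positivity
    linarith
  have hpos : 0 < (1 + s / m) / (1 - s / m) := by
    have h : 0 < 1 - s / m := by
      rw [one_sub_div hm0.ne']
      positivity
    positivity
  have hlog := (Real.log_le_iff_le_exp hpos).mpr key
  have e : (2 / s) * Real.arctanh (s / m) = Real.log ((1 + s / m) / (1 - s / m)) / s := by
    unfold Real.arctanh
    field_simp
  rw [ge_iff_le, e, div_le_iff₀ hs]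
  linarith
end

section
/- For all real numbers β ∈ (0,1) and k > 1, the integral ∫₀^π (2/√(1−β²))·artanh( √(1−β²)·sin φ / (k − β·cos φ) )·sin φ dφ equals 2π(k − √(k²−1)). In particular, this integral is independent of β. (Note that the artanh is well defined since √(1−β²)·sin φ < k − β·cos φ for all φ ∈ (0,π) when k > 1.) -/
open Real intervalIntegral

/-- The real inverse hyperbolic tangent. -/
noncomputable def Real.artanhLog (x : ℝ) : ℝ := Real.log ((1 + x) / (1 - x)) / 2

/-- Antiderivative of `log (k - cos θ) * cos θ`. -/
noncomputable def auxF (k w θ : ℝ) : ℝ :=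
  Real.log (k - Real.cos θ) * Real.sin θ - (k * θ + Real.sin θ
    - w * (θ + 2 * Real.arctan ((k - w) * Real.sin θ / (1 - (k - w) * Real.cos θ))))

/-- Antiderivative of `log (k - cos θ) * sin θ`. -/
noncomputable def auxH (k θ : ℝ) : ℝ :=
  (k - Real.cos θ) * Real.log (k - Real.cos θ) - (k - Real.cos θ)

lemma auxH_deriv (k θ : ℝ) (hk : 1 < k) :
    HasDerivAt (auxH k) (Real.log (k - Real.cos θ) * Real.sin θ) θ := by
  have hp : 0 < k - Real.cos θ := by linarith [Real.cos_le_one θ]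
  have h1 : HasDerivAt (fun x => k - Real.cos x) (Real.sin θ) θ := by
    simpa using (Real.hasDerivAt_cos θ).const_sub k
  have h2 := (h1.mul (h1.log hp.ne')).sub h1
  refine h2.congr_deriv ?_
  field_simp
  ring

lemma auxF_deriv (k w θ : ℝ) (hk : 1 < k) (hw : 0 < w) (hkw : w ^ 2 = k ^ 2 - 1) :
    HasDerivAt (auxF k w) (Real.log (k - Real.cos θ) * Real.cos θ) θ := by
  have hp : 0 < k - Real.cos θ := by linarith [Real.cos_le_one θ]
  have hwk : w < k := by nlinarith
  have hr1 : k - w < 1 := by nlinarith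
  have hq : 0 < 1 - (k - w) * Real.cos θ := by
    nlinarith [Real.cos_le_one θ, Real.neg_one_le_cos θ]
  have h1 : HasDerivAt (fun x => k - Real.cos x) (Real.sin θ) θ := by
    simpa using (Real.hasDerivAt_cos θ).const_sub k
  have hs := Real.hasDerivAt_sin θ
  have hc := Real.hasDerivAt_cos θ
  have ha := (((hs.const_mul (k - w)).div ((hc.const_mul (k - w)).const_sub 1) hq.ne').arctan).const_mul 2
  have hid := hasDerivAt_id θ
  have h2 := ((h1.log hp.ne').mul hs).sub
    (((hid.const_mul k).add hs).sub ((hid.add ha).const_mul w))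
  refine h2.congr_deriv ?_
  simp only [Pi.div_apply]
  have hsc := Real.sin_sq_add_cos_sq θ
  set s := Real.sin θ
  set c := Real.cos θ
  have hD : (1 - (k - w) * c) ^ 2 + ((k - w) * s) ^ 2 = 2 * (k - w) * (k - c) := by
    have : s ^ 2 = 1 - c ^ 2 := by linarith
    rw [mul_pow, this]; linear_combination hkw
  have harc : 1 / (1 + ((k - w) * s / (1 - (k - w) * c)) ^ 2) *
      (((k - w) * c * (1 - (k - w) * c) - (k - w) * s * (-((k - w) * -s))) / (1 - (k - w) * c) ^ 2)
      = (c - (k - w)) / (2 * (k - c)) := by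
    have e : 1 + ((k - w) * s / (1 - (k - w) * c)) ^ 2
        = 2 * (k - w) * (k - c) / (1 - (k - w) * c) ^ 2 := by
      rw [← hD]; field_simp
    have hkw0 : k - w ≠ 0 := by linarith
    have hp' := hp.ne'
    have hq' := hq.ne'
    rw [e]
    field_simp
    linear_combination (-(k - w)) * hsc
  simp only [harc, mul_one]
  have hp' := hp.ne'
  field_simp
  linear_combination hsc + hkw

/-- Hyperbolic case with `0 < β < 1` (negative effective curvature): for
`β ∈ (0,1)` and `k > 1`,
`∫₀^π (2/√(1−β²))·artanh(√(1−β²) sin φ / (k − β cos φ))·sin φ dφ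
  = 2π(k − √(k²−1))`, independently of `β`. -/
theorem hyperbolic_inner_integral_beta_lt_one (k β : ℝ)
    (hβ0 : 0 < β) (hβ1 : β < 1) (hk : 1 < k) :
    ∫ φ in (0:ℝ)..π,
      (2 / Real.sqrt (1 - β ^ 2)) *
        Real.artanhLog (Real.sqrt (1 - β ^ 2) * Real.sin φ / (k - β * Real.cos φ)) *
        Real.sin φ
      = 2 * π * (k - Real.sqrt (k ^ 2 - 1)) := by
  obtain ⟨α, hα, hα'⟩ : ∃ α, Real.cos α = β ∧ Real.sin α = Real.sqrt (1 - β ^ 2) :=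
    ⟨Real.arccos β, Real.cos_arccos (by linarith) hβ1.le, Real.sin_arccos β⟩
  have hs : 0 < Real.sqrt (1 - β ^ 2) := Real.sqrt_pos.2 (by nlinarith)
  rw [← hα'] at hs ⊢
  subst hα
  have hw : 0 < Real.sqrt (k ^ 2 - 1) := Real.sqrt_pos.2 (by nlinarith)
  have hkw : Real.sqrt (k ^ 2 - 1) ^ 2 = k ^ 2 - 1 := Real.sq_sqrt (by nlinarith)
  set w := Real.sqrt (k ^ 2 - 1)
  have hpos : ∀ x, 0 < k - Real.cos x := fun x => by linarith [Real.cos_le_one x]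
  have hfun : ∀ φ, (2 / Real.sin α) *
        Real.artanhLog (Real.sin α * Real.sin φ / (k - Real.cos α * Real.cos φ)) * Real.sin φ
      = (1 / Real.sin α) * (Real.log (k - Real.cos (φ + α)) * Real.sin φ
          - Real.log (k - Real.cos (-φ + α)) * Real.sin φ) := by
    intro φ
    have e1 : k - Real.cos (φ + α) = k - Real.cos α * Real.cos φ + Real.sin α * Real.sin φ := by
      rw [Real.cos_add]; ring
    have e2 : k - Real.cos (-φ + α) = k - Real.cos α * Real.cos φ - Real.sin α * Real.sin φ := by
      rw [Real.cos_add, Real.cos_neg, Real.sin_neg]; ring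
    have hd : 0 < k - Real.cos α * Real.cos φ := by
      have := hpos (φ + α); have := hpos (-φ + α); linarith
    have e3 : (1 + Real.sin α * Real.sin φ / (k - Real.cos α * Real.cos φ)) /
        (1 - Real.sin α * Real.sin φ / (k - Real.cos α * Real.cos φ))
        = (k - Real.cos (φ + α)) / (k - Real.cos (-φ + α)) := by
      rw [e1, e2, one_add_div hd.ne', one_sub_div hd.ne', div_div_div_cancel_right₀ hd.ne']
    rw [Real.artanhLog, e3, Real.log_div (hpos _).ne' (hpos _).ne']
    ring
  simp_rw [hfun]
  let G : ℝ → ℝ := fun φ => Real.cos α * auxH k (φ + α) - Real.sin α * auxF k w (φ + α)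
  have hG : ∀ φ, HasDerivAt G (Real.log (k - Real.cos (φ + α)) * Real.sin φ) φ := by
    intro φ
    have h1 := ((auxH_deriv k (φ + α) hk).comp_add_const φ α).const_mul (Real.cos α)
    have h2 := ((auxF_deriv k w (φ + α) hk hw hkw).comp_add_const φ α).const_mul (Real.sin α)
    refine (h1.sub h2).congr_deriv ?_
    have : Real.sin φ = Real.sin (φ + α) * Real.cos α - Real.cos (φ + α) * Real.sin α := by
      rw [← Real.sin_sub]; ring_nf
    rw [this]; ring
  have hK : ∀ φ, HasDerivAt (fun x => (1 / Real.sin α) * (G x - G (-x)))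
      ((1 / Real.sin α) * (Real.log (k - Real.cos (φ + α)) * Real.sin φ
          - Real.log (k - Real.cos (-φ + α)) * Real.sin φ)) φ := by
    intro φ
    have h2 := (hG (-φ)).comp φ (hasDerivAt_neg φ)
    refine (((hG φ).sub h2).const_mul (1 / Real.sin α)).congr_deriv ?_
    rw [Real.sin_neg]; ring
  have hcont : Continuous (fun φ => (1 / Real.sin α) * (Real.log (k - Real.cos (φ + α)) * Real.sin φ
          - Real.log (k - Real.cos (-φ + α)) * Real.sin φ)) := by
    have c1 : Continuous (fun φ => Real.log (k - Real.cos (φ + α))) :=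
      Continuous.log (by fun_prop) (fun x => (hpos _).ne')
    have c2 : Continuous (fun φ => Real.log (k - Real.cos (-φ + α))) :=
      Continuous.log (by fun_prop) (fun x => (hpos _).ne')
    fun_prop
  rw [integral_eq_sub_of_hasDerivAt (fun x _ => hK x) (hcont.intervalIntegrable _ _)]
  have ec : Real.cos (-π + α) = Real.cos (π + α) := by
    rw [show π + α = (-π + α) + 2 * π by ring, Real.cos_add_two_pi]
  have es : Real.sin (-π + α) = Real.sin (π + α) := by
    rw [show π + α = (-π + α) + 2 * π by ring, Real.sin_add_two_pi]
  simp only [G, auxH, auxF, ec, es, neg_zero, sub_self, mul_zero, sub_zero]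
  field_simp
  ring
end

section
/- For every real number k > 1, the integral ∫₀^π 2·artanh(sin φ / k)·sin φ dφ equals 2π(k − √(k²−1)). -/
open Real intervalIntegral

/-- The real inverse hyperbolic tangent. -/
noncomputable def Real.artanhFn (x : ℝ) : ℝ := Real.log ((1 + x) / (1 - x)) / 2

lemma aux_deriv (k w : ℝ) (hk : 1 < k) (hw : 0 < w) (hw2 : w ^ 2 = k ^ 2 - 1) (x : ℝ) :
    HasDerivAt (fun φ : ℝ => -((log (k + sin φ) - log (k - sin φ)) * cos φ) + 2 * k * φ
      - 2 * w * (φ - arctan ((k - w) * (sin φ * cos φ) / (k * cos φ ^ 2 + w * sin φ ^ 2))))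
      ((log (k + sin x) - log (k - sin x)) * sin x) x := by
  have hs := Real.hasDerivAt_sin x
  have hc := Real.hasDerivAt_cos x
  have h1 : 0 < k + sin x := by linarith [neg_one_le_sin x]
  have h2 : 0 < k - sin x := by linarith [sin_le_one x]
  have hsc := sin_sq_add_cos_sq x
  have hD : 0 < k * cos x ^ 2 + w * sin x ^ 2 := by
    by_cases h : sin x = 0
    · have : cos x ^ 2 = 1 := by rw [h] at hsc; linarith
      rw [this, h]; linarith
    · have : 0 < w * sin x ^ 2 := by positivity
      have : 0 ≤ k * cos x ^ 2 := by positivity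
      linarith
  have e1 := (((hs.const_add k).log h1.ne').sub ((hs.const_sub k).log h2.ne')).mul hc
  have e2 := ((hs.mul hc).const_mul (k - w)).div
    (((hc.pow 2).const_mul k).add ((hs.pow 2).const_mul w)) hD.ne'
  have e3 := (e1.neg.add ((hasDerivAt_id x).const_mul (2 * k))).sub
    (((hasDerivAt_id x).sub e2.arctan).const_mul (2 * w))
  refine e3.congr_deriv ?_
  simp only [Pi.mul_apply, Pi.add_apply, Pi.sub_apply, Pi.div_apply, Pi.pow_apply]
  generalize log (k + sin x) = A
  generalize log (k - sin x) = B
  generalize sin x = s at *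
  generalize cos x = c at *
  have hE : (k * c ^ 2 + w * s ^ 2) ^ 2 + ((k - w) * (s * c)) ^ 2 = k ^ 2 - s ^ 2 := by
    have hc2 : c ^ 2 = 1 - s ^ 2 := by linarith
    linear_combination (k ^ 2 * c ^ 2 + w ^ 2 * s ^ 2) * hsc + k ^ 2 * hsc + s ^ 2 * hw2
  have hP : 0 < k ^ 2 - s ^ 2 := by nlinarith
  have hG : 1 / (1 + ((k - w) * (s * c) / (k * c ^ 2 + w * s ^ 2)) ^ 2)
      = (k * c ^ 2 + w * s ^ 2) ^ 2 / (k ^ 2 - s ^ 2) := by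
    rw [← hE]; field_simp
  have hL : c / (k + s) - -c / (k - s) = 2 * k * c / (k ^ 2 - s ^ 2) := by
    field_simp
    ring
  rw [hG, hL]
  have hD' := hD.ne'
  have hP' := hP.ne'
  have hQ : (k ^ 2 - s ^ 2) = (k ^ 2 * c ^ 2 + w ^ 2 * s ^ 2) := by
    linear_combination -k ^ 2 * hsc - s ^ 2 * hw2
  have hM : (k - w) * (c * c + s * -s) * (k * c ^ 2 + w * s ^ 2) -
      (k - w) * (s * c) * (k * (2 * c * -s) + w * (2 * s * c))
      = (k - w) * (k * c ^ 2 - w * s ^ 2) := by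
    linear_combination (k - w) * (k * c ^ 2 - w * s ^ 2) * hsc
  simp only [Nat.cast_ofNat, Nat.add_one_sub_one, pow_one]
  rw [hM, div_mul_div_comm, mul_comm (k ^ 2 - s ^ 2),
    mul_div_mul_left _ _ (pow_ne_zero 2 hD')]
  field_simp
  linear_combination -2 * w * hQ - 2 * w ^ 2 * k * hsc - 2 * k * hsc - 2 * k * hw2

theorem hyperbolic_inner_integral_beta_zero (k : ℝ) (hk : 1 < k) :
    ∫ φ in (0:ℝ)..π, 2 * Real.artanhFn (Real.sin φ / k) * Real.sin φ
      = 2 * π * (k - Real.sqrt (k ^ 2 - 1)) := by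
  have hpos : 0 < k ^ 2 - 1 := by nlinarith
  have key := aux_deriv k (√(k ^ 2 - 1)) hk (sqrt_pos.2 hpos) (sq_sqrt hpos.le)
  have hf : ∀ φ : ℝ, 2 * Real.artanhFn (sin φ / k) * sin φ
      = (log (k + sin φ) - log (k - sin φ)) * sin φ := by
    intro φ
    have h1 : 0 < k + sin φ := by linarith [neg_one_le_sin φ]
    have h2 : 0 < k - sin φ := by linarith [sin_le_one φ]
    have h0 : k ≠ 0 := by linarith
    have : (1 + sin φ / k) / (1 - sin φ / k) = (k + sin φ) / (k - sin φ) := by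
      have : 1 - sin φ / k ≠ 0 := by
        rw [one_sub_div h0]; exact (div_pos h2 (by linarith)).ne'
      rw [one_add_div h0, one_sub_div h0, div_div_div_cancel_right₀ h0]
    rw [Real.artanhFn, this, log_div h1.ne' h2.ne']
    ring
  simp_rw [hf]
  rw [integral_eq_sub_of_hasDerivAt (fun x _ => key x)]
  · simp
    ring
  · apply Continuous.intervalIntegrable
    refine Continuous.mul (Continuous.sub (Continuous.log (by fun_prop) ?_)
      (Continuous.log (by fun_prop) ?_)) continuous_sin
    · intro x; linarith [neg_one_le_sin x]
    · intro x; linarith [sin_le_one x]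
end
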